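/- Fix n ≥ 1 and dimensions n_j, m. For i = 1, …, n let H_i : [0,∞) → ℝ^{n_j×n_j} be continuously differentiable with H_i(t) symmetric and μI ⪯ H_i(t) ⪯ MI (0 < μ ≤ M); let C_i be continuous and bounded with H_i'(t) = C_i(t) + C_i(t)ᵀ; let K_{D_i}, P_i, K be symmetric positive definite; and let Y_i : [0,∞) → ℝ^{n_j×m} be continuously differentiable with Y_i and Y_i' bounded. Suppose differentiable s_i and ã_i satisfy H_i(t)ṡ_i(t) + (C_i(t) + K_{D_i})s_i(t) = Y_i(t)ã_i(t) and ã̇_i(t) = −P_i[Y_i(t)ᵀs_i(t) − (K/n)∑_{j=1}^n (ã_j(t) − ã_i(t))]. Then as t → ∞: each s_i(t) → 0, the stacked error satisfies ã(t)ᵀL_K ã(t) → 0, and consequently ã_i(t) − ã_j(t) → 0 for every pair i, j (each estimate asymptotically synchronizes to the network average). -/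

import Mathlib

/-!
The energy `V = ½ ∑ᵢ (sᵢᵀ Hᵢ sᵢ + ãᵢᵀ Pᵢ⁻¹ ãᵢ)` is a Lyapunov function. Since `Hᵢ' = Cᵢ + Cᵢᵀ`,
the Coriolis terms cancel; the regressor terms cancel against the adaptation law; and summing the
consensus terms over the network (`sum_coupling`) leaves `V' = -W` with
`W = ∑ᵢ sᵢᵀ K_{Dᵢ} sᵢ + ãᵀ L_K ã ≥ 0`.

Hence `V` is bounded, so `sᵢ` and `ãᵢ` are bounded, and by the dynamics (using `Hᵢ ⪰ μ I`) so are
their derivatives. Thus `W` has bounded derivative, and Barbalat's lemma (`barbalat`) gives `W → 0`.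
Both summands of `W` therefore vanish in the limit. The form `ãᵀ L_K ã` is
`(1/2n) ∑ᵢⱼ (ãᵢ - ãⱼ)ᵀ K (ãᵢ - ãⱼ)` (`disagreement_eq`), so its decay forces synchronization.
-/

open Matrix Kronecker MeasureTheory Filter Topology

/-- The block Laplacian `L_K = (I_n − (1/n) 𝟙𝟙ᵀ) ⊗ K` of an all-to-all coupled
network of `n` agents with coupling gain `K`. -/
noncomputable def blockLaplacian (n m : ℕ) (K : Matrix (Fin m) (Fin m) ℝ) :
    Matrix (Fin n × Fin m) (Fin n × Fin m) ℝ :=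
  ((1 : Matrix (Fin n) (Fin n) ℝ) - (n : ℝ)⁻¹ • Matrix.of fun _ _ => (1:ℝ)) ⊗ₖ K

section Aux

variable {ι κ : Type*} [Fintype κ]

/-! ### Bounded signals on `[0, ∞)` -/

/-- Boundedness of a scalar signal on `[0, ∞)`. -/
def Bdd (f : ℝ → ℝ) : Prop := ∃ c, ∀ t, 0 ≤ t → |f t| ≤ c

lemma Bdd.const (r : ℝ) : Bdd fun _ => r := ⟨|r|, fun _ _ => le_rfl⟩

lemma Bdd.add {f g : ℝ → ℝ} (hf : Bdd f) (hg : Bdd g) : Bdd fun t => f t + g t := by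
  obtain ⟨c, hc⟩ := hf
  obtain ⟨d, hd⟩ := hg
  exact ⟨c + d, fun t ht => (abs_add_le _ _).trans (add_le_add (hc t ht) (hd t ht))⟩

lemma Bdd.mul {f g : ℝ → ℝ} (hf : Bdd f) (hg : Bdd g) : Bdd fun t => f t * g t := by
  obtain ⟨c, hc⟩ := hf
  obtain ⟨d, hd⟩ := hg
  refine ⟨c * d, fun t ht => ?_⟩
  rw [abs_mul]
  exact mul_le_mul (hc t ht) (hd t ht) (abs_nonneg _) ((abs_nonneg _).trans (hc t ht))

lemma Bdd.neg {f : ℝ → ℝ} (hf : Bdd f) : Bdd fun t => -f t := by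
  simpa [Bdd] using hf

lemma Bdd.sub {f g : ℝ → ℝ} (hf : Bdd f) (hg : Bdd g) : Bdd fun t => f t - g t := by
  simpa only [sub_eq_add_neg] using hf.add hg.neg

lemma Bdd.sum {α : Type*} (u : Finset α) {f : α → ℝ → ℝ} (h : ∀ a, Bdd (f a)) :
    Bdd fun t => ∑ a ∈ u, f a t := by
  choose c hc using h
  exact ⟨∑ a ∈ u, c a, fun t ht =>
    (Finset.abs_sum_le_sum_abs _ _).trans (Finset.sum_le_sum fun a _ => hc a t ht)⟩

lemma Bdd.mulVec {A : ℝ → Matrix ι κ ℝ} {x : ℝ → κ → ℝ} (hA : ∀ a b, Bdd fun t => A t a b)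
    (hx : ∀ b, Bdd fun t => x t b) (a : ι) : Bdd fun t => (A t *ᵥ x t) a :=
  Bdd.sum _ fun b => (hA a b).mul (hx b)

lemma Bdd.of_sq_le {f g : ℝ → ℝ} {c : ℝ} (hc : 0 < c) (hg : Bdd g)
    (h : ∀ t, 0 ≤ t → c * f t ^ 2 ≤ g t) : Bdd f := by
  obtain ⟨d, hd⟩ := hg
  refine ⟨√(d / c), fun t ht => Real.abs_le_sqrt ?_⟩
  rw [le_div_iff₀ hc, mul_comm]
  exact (h t ht).trans ((le_abs_self _).trans (hd t ht))

lemma tendsto_zero_of_sq_le {f g : ℝ → ℝ} {c : ℝ} (hc : 0 < c) (hg : Tendsto g atTop (𝓝 0))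
    (h : ∀ t, 0 ≤ t → c * f t ^ 2 ≤ g t) : Tendsto f atTop (𝓝 0) := by
  have h2 : Tendsto (fun t => c⁻¹ * g t) atTop (𝓝 0) := by simpa using hg.const_mul c⁻¹
  have h3 : Tendsto (fun t => f t ^ 2) atTop (𝓝 0) := by
    refine tendsto_of_tendsto_of_tendsto_of_le_of_le' tendsto_const_nhds h2
      (Eventually.of_forall fun t => sq_nonneg _) ?_
    filter_upwards [eventually_ge_atTop 0] with t ht
    rw [inv_mul_eq_div, le_div_iff₀ hc, mul_comm]
    exact h t ht
  have h4 := h3.sqrt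
  simp only [Real.sqrt_sq_eq_abs, Real.sqrt_zero] at h4
  exact (tendsto_zero_iff_abs_tendsto_zero f).2 h4

/-- Scalar signals that are bounded on `[0, ∞)` and differentiable there with bounded
derivative. -/
def BddC1 (f : ℝ → ℝ) : Prop :=
  Bdd f ∧ ∃ f' : ℝ → ℝ, (∀ t, 0 ≤ t → HasDerivWithinAt f (f' t) (Set.Ici 0) t) ∧ Bdd f'

lemma BddC1.const (r : ℝ) : BddC1 fun _ => r :=
  ⟨.const r, fun _ => 0, fun _ _ => hasDerivWithinAt_const .., .const 0⟩

lemma BddC1.add {f g : ℝ → ℝ} : BddC1 f → BddC1 g → BddC1 fun t => f t + g t :=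
  fun ⟨hf, f', hf', bf'⟩ ⟨hg, g', hg', bg'⟩ =>
    ⟨hf.add hg, fun t => f' t + g' t, fun t ht => (hf' t ht).fun_add (hg' t ht), bf'.add bg'⟩

lemma BddC1.mul {f g : ℝ → ℝ} : BddC1 f → BddC1 g → BddC1 fun t => f t * g t :=
  fun ⟨hf, f', hf', bf'⟩ ⟨hg, g', hg', bg'⟩ =>
    ⟨hf.mul hg, fun t => f' t * g t + f t * g' t, fun t ht => (hf' t ht).fun_mul (hg' t ht),
      (bf'.mul hg).add (hf.mul bg')⟩

lemma BddC1.sub {f g : ℝ → ℝ} (hf : BddC1 f) (hg : BddC1 g) : BddC1 fun t => f t - g t := by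
  have := hf.add ((BddC1.const (-1)).mul hg)
  simpa [sub_eq_add_neg] using this

lemma BddC1.sum {α : Type*} (u : Finset α) {f : α → ℝ → ℝ} (h : ∀ a, BddC1 (f a)) :
    BddC1 fun t => ∑ a ∈ u, f a t := by
  choose hb f' hf' bf' using h
  exact ⟨Bdd.sum u hb, fun t => ∑ a ∈ u, f' a t,
    fun t ht => HasDerivWithinAt.fun_sum fun a _ => hf' a t ht, Bdd.sum u bf'⟩

lemma BddC1.bilin [Fintype ι] (A : Matrix ι κ ℝ) {x : ℝ → ι → ℝ} {y : ℝ → κ → ℝ}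
    (hx : ∀ a, BddC1 fun t => x t a) (hy : ∀ a, BddC1 fun t => y t a) :
    BddC1 fun t => x t ⬝ᵥ A *ᵥ y t :=
  BddC1.sum _ fun a => (hx a).mul (BddC1.sum _ fun b => (BddC1.const (A a b)).mul (hy b))

/-! ### Barbalat's lemma -/

/-- Barbalat's lemma in Lyapunov form: over a window of length `δ` the mean value theorem gives
`V (t + δ) - V t = -δ W ξ` with `|W ξ - W t| ≤ B δ`, and the left side tends to `0` because `V`
is nonincreasing and bounded below. -/
lemma barbalat {V W : ℝ → ℝ} (hV : ∀ t, 0 ≤ t → HasDerivWithinAt V (-W t) (Set.Ici 0) t)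
    (hV0 : ∀ t, 0 ≤ t → 0 ≤ V t) (hW0 : ∀ t, 0 ≤ t → 0 ≤ W t) (hW : BddC1 W) :
    Tendsto W atTop (𝓝 0) := by
  obtain ⟨-, W', hW', B, hB⟩ := hW
  have hB0 : 0 ≤ B := (abs_nonneg _).trans (hB 0 le_rfl)
  have hanti : AntitoneOn V (Set.Ici 0) :=
    antitoneOn_of_hasDerivWithinAt_nonpos (convex_Ici 0)
      (fun t ht => (hV t ht).continuousWithinAt)
      (fun t ht => (hV t (interior_subset ht)).mono interior_subset)
      (fun t ht => by simpa using hW0 t (interior_subset ht))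
  have hlim : ∃ l, Tendsto V atTop (𝓝 l) := by
    have hmono : Antitone fun t => V (max t 0) := fun a b hab =>
      hanti (Set.mem_Ici.2 (le_max_right _ _)) (Set.mem_Ici.2 (le_max_right _ _)) (max_le_max_right 0 hab)
    refine ⟨_, (tendsto_atTop_ciInf hmono ⟨0, ?_⟩).congr' ?_⟩
    · rintro _ ⟨t, rfl⟩
      exact hV0 _ (le_max_right _ _)
    · filter_upwards [eventually_ge_atTop 0] with t ht
      simp [ht]
  obtain ⟨l, hl⟩ := hlim
  have hkey : ∀ δ, 0 < δ → ∀ t, 0 ≤ t → W t ≤ (V t - V (t + δ)) / δ + B * δ := by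
    intro δ hδ t ht
    obtain ⟨ξ, hξ, he⟩ := exists_hasDerivAt_eq_slope V (fun t => -W t)
      (show t < t + δ by linarith)
      (fun x hx => ((hV x (ht.trans hx.1)).continuousWithinAt).mono
        fun y hy => ht.trans hy.1)
      (fun x hx => (hV x (ht.trans hx.1.le)).hasDerivAt (Ici_mem_nhds (ht.trans_lt hx.1)))
    have hξ0 : 0 ≤ ξ := ht.trans hξ.1.le
    have hlip := (convex_Ici (0 : ℝ)).norm_image_sub_le_of_norm_hasDerivWithin_le
      (fun x hx => hW' x hx) (fun x hx => hB x hx) (show ξ ∈ Set.Ici (0 : ℝ) from hξ0)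
      (show t ∈ Set.Ici (0 : ℝ) from ht)
    have h1 : W t - W ξ ≤ B * δ := by
      refine (le_abs_self _).trans (hlip.trans (mul_le_mul_of_nonneg_left ?_ hB0))
      rw [Real.norm_eq_abs, abs_le]
      constructor <;> linarith [hξ.1, hξ.2]
    have h2 : W ξ = (V t - V (t + δ)) / δ := by
      rw [add_sub_cancel_left] at he
      rw [← neg_inj, he, ← neg_div, neg_sub]
    linarith
  rw [Metric.tendsto_atTop']
  intro ε hε
  obtain ⟨δ, hδ, hBδ⟩ : ∃ δ, 0 < δ ∧ B * δ < ε / 2 := by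
    refine ⟨ε / (2 * (B + 1)), by positivity, ?_⟩
    rw [mul_div_assoc', div_lt_div_iff₀ (by positivity) (by positivity)]
    nlinarith
  have ht : Tendsto (fun t => (V t - V (t + δ)) / δ) atTop (𝓝 0) := by
    have := (hl.sub (hl.comp (tendsto_atTop_add_const_right atTop δ tendsto_id))).div_const δ
    simpa using this
  obtain ⟨N, hN⟩ := ((ht.eventually (gt_mem_nhds (half_pos hε))).and
    (eventually_ge_atTop 0)).exists_forall_of_atTop
  refine ⟨N, fun t htN => ?_⟩
  obtain ⟨h1, h2⟩ := hN t htN.le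
  rw [Real.dist_eq, sub_zero, abs_of_nonneg (hW0 t h2)]
  linarith [hkey δ hδ t h2]

/-! ### Quadratic forms -/

/-- A positive definite form is bounded below on the compact unit sphere of the sup norm,
hence dominates a multiple of the square of each coordinate. -/
lemma posDef_coord_sq_le [Fintype ι] {A : Matrix ι ι ℝ} (hA : A.PosDef) :
    ∃ c, 0 < c ∧ ∀ (x : ι → ℝ) a, c * x a ^ 2 ≤ x ⬝ᵥ A *ᵥ x := by
  have hcont : Continuous fun x : ι → ℝ => x ⬝ᵥ A *ᵥ x := by fun_prop
  have hpos : ∀ x : ι → ℝ, x ≠ 0 → 0 < x ⬝ᵥ A *ᵥ x := fun x hx => by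
    simpa using hA.dotProduct_mulVec_pos hx
  obtain ⟨c, hc, h⟩ : ∃ c, 0 < c ∧ ∀ x ∈ Metric.sphere (0 : ι → ℝ) 1, c ≤ x ⬝ᵥ A *ᵥ x := by
    rcases (Metric.sphere (0 : ι → ℝ) 1).eq_empty_or_nonempty with he | hne
    · exact ⟨1, one_pos, by simp [he]⟩
    · obtain ⟨x₀, hx₀, hmin⟩ := (isCompact_sphere (0 : ι → ℝ) 1).exists_isMinOn hne
        hcont.continuousOn
      exact ⟨_, hpos x₀ (ne_zero_of_mem_unit_sphere ⟨x₀, hx₀⟩), fun x hx => hmin hx⟩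
  refine ⟨c, hc, fun x a => ?_⟩
  rcases eq_or_ne x 0 with rfl | hx
  · simp
  have hn : 0 < ‖x‖ := norm_pos_iff.2 hx
  have h1 := h (‖x‖⁻¹ • x) (by simp [norm_smul, hn.ne'])
  rw [mulVec_smul, dotProduct_smul, smul_dotProduct, smul_eq_mul, smul_eq_mul, ← mul_assoc,
    ← mul_inv, inv_mul_eq_div, le_div_iff₀ (by positivity)] at h1
  have h2 : x a ^ 2 ≤ ‖x‖ * ‖x‖ := by
    rw [← sq]
    exact sq_le_sq' (neg_le_of_abs_le (norm_le_pi_norm x a)) (le_of_abs_le (norm_le_pi_norm x a))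
  exact (mul_le_mul_of_nonneg_left h2 hc.le).trans h1

lemma hasDerivWithinAt_dotProduct [Fintype ι] {x y : ℝ → ι → ℝ} {x' y' : ι → ℝ} {u : Set ℝ} {t : ℝ}
    (hx : HasDerivWithinAt x x' u t) (hy : HasDerivWithinAt y y' u t) :
    HasDerivWithinAt (fun τ => x τ ⬝ᵥ y τ) (x' ⬝ᵥ y t + x t ⬝ᵥ y') u t := by
  rw [hasDerivWithinAt_pi] at hx hy
  simp only [dotProduct, ← Finset.sum_add_distrib]
  exact HasDerivWithinAt.fun_sum fun a _ => (hx a).fun_mul (hy a)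

lemma hasDerivWithinAt_mulVec {A : ℝ → Matrix ι κ ℝ} {A' : Matrix ι κ ℝ} {x : ℝ → κ → ℝ}
    {x' : κ → ℝ} {u : Set ℝ} {t : ℝ}
    (hA : ∀ a b, HasDerivWithinAt (fun τ => A τ a b) (A' a b) u t)
    (hx : HasDerivWithinAt x x' u t) :
    HasDerivWithinAt (fun τ => A τ *ᵥ x τ) (A' *ᵥ x t + A t *ᵥ x') u t := by
  rw [hasDerivWithinAt_pi] at hx ⊢
  intro a
  simp only [Pi.add_apply, mulVec, dotProduct, ← Finset.sum_add_distrib]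
  exact HasDerivWithinAt.fun_sum fun b _ => (hA a b).fun_mul (hx b)

lemma symm_dot [Fintype ι] {A : Matrix ι ι ℝ} (hA : A.IsSymm) (x y : ι → ℝ) :
    x ⬝ᵥ A *ᵥ y = y ⬝ᵥ A *ᵥ x := by
  rw [dotProduct_mulVec, ← mulVec_transpose, hA.eq, dotProduct_comm]

/-! ### The disagreement energy of the network -/

/-- The disagreement energy `∑ᵢ aᵢᵀ K aᵢ - (1/n) ∑ᵢⱼ aᵢᵀ K aⱼ`, that is `aᵀ L_K a` unfolded
into blocks. -/
noncomputable def disagreement {n m : ℕ} (K : Matrix (Fin m) (Fin m) ℝ)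
    (a : Fin n → Fin m → ℝ) : ℝ :=
  ∑ i, a i ⬝ᵥ K *ᵥ a i - (n : ℝ)⁻¹ * ∑ i, ∑ j, a i ⬝ᵥ K *ᵥ a j

lemma blockLaplacian_form {n m : ℕ} (K : Matrix (Fin m) (Fin m) ℝ) (a : Fin n → Fin m → ℝ) :
    (fun q : Fin n × Fin m => a q.1 q.2) ⬝ᵥ
      (blockLaplacian n m K *ᵥ fun q : Fin n × Fin m => a q.1 q.2) = disagreement K a := by
  have h : ∀ i k, (blockLaplacian n m K *ᵥ fun q : Fin n × Fin m => a q.1 q.2) (i, k)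
      = (K *ᵥ a i) k - (n : ℝ)⁻¹ * ∑ j, (K *ᵥ a j) k := by
    intro i k
    simp only [blockLaplacian, mulVec, dotProduct, Fintype.sum_prod_type, kroneckerMap_apply,
      Matrix.sub_apply, Matrix.smul_apply, of_apply, smul_eq_mul, mul_one, sub_mul, Finset.sum_sub_distrib,
      one_apply, ite_mul, one_mul, zero_mul, mul_assoc, ← Finset.mul_sum]
    simp
  rw [disagreement, dotProduct, Fintype.sum_prod_type]
  simp only [h, mul_sub, Finset.sum_sub_distrib, dotProduct, Finset.mul_sum]
  congr 1
  refine Finset.sum_congr rfl fun i _ => ?_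
  rw [Finset.sum_comm]
  exact Finset.sum_congr rfl fun _ _ => Finset.sum_congr rfl fun _ _ => by ring

/-- `aᵀ L_K a` is a positive multiple of the sum of all pairwise squared `K`-distances between the
agents, so it measures exactly their lack of consensus. -/
lemma disagreement_eq {n m : ℕ} (hn : 1 ≤ n) {K : Matrix (Fin m) (Fin m) ℝ} (hK : K.IsSymm)
    (a : Fin n → Fin m → ℝ) :
    disagreement K a
      = (2 * (n : ℝ))⁻¹ * ∑ i, ∑ j, (a i - a j) ⬝ᵥ K *ᵥ (a i - a j) := by
  have h : ∀ i j, (a i - a j) ⬝ᵥ K *ᵥ (a i - a j)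
      = a i ⬝ᵥ K *ᵥ a i + a j ⬝ᵥ K *ᵥ a j - 2 * (a i ⬝ᵥ K *ᵥ a j) := by
    intro i j
    rw [mulVec_sub, dotProduct_sub, sub_dotProduct, sub_dotProduct, symm_dot hK (a j) (a i)]
    ring
  have hn' : (n : ℝ) ≠ 0 := by positivity
  simp only [h, Finset.sum_sub_distrib, Finset.sum_add_distrib, ← Finset.mul_sum,
    Finset.sum_const, Finset.card_univ, Fintype.card_fin, nsmul_eq_mul, disagreement]
  field_simp
  ring

lemma sq_le_disagreement {n m : ℕ} (hn : 1 ≤ n) {K : Matrix (Fin m) (Fin m) ℝ}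
    (hK : K.PosDef) :
    ∃ c, 0 < c ∧ ∀ (a : Fin n → Fin m → ℝ) i j k, c * (a i k - a j k) ^ 2 ≤ disagreement K a := by
  obtain ⟨c, hc, h⟩ := posDef_coord_sq_le hK
  have hn' : (0 : ℝ) < n := by positivity
  have h0 : ∀ x : Fin m → ℝ, 0 ≤ x ⬝ᵥ K *ᵥ x := fun x => by
    simpa using hK.posSemidef.dotProduct_mulVec_nonneg x
  refine ⟨(2 * (n : ℝ))⁻¹ * c, by positivity, fun a i j k => ?_⟩
  rw [disagreement_eq hn (by simpa using hK.isHermitian), mul_assoc]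
  refine mul_le_mul_of_nonneg_left ((h (a i - a j) k).trans ?_) (by positivity)
  refine le_trans ?_ (Finset.single_le_sum (fun i _ => Finset.sum_nonneg fun j _ => h0 _)
    (Finset.mem_univ i))
  exact Finset.single_le_sum (f := fun j => (a i - a j) ⬝ᵥ K *ᵥ (a i - a j))
    (fun j _ => h0 _) (Finset.mem_univ j)

lemma disagreement_nonneg {n m : ℕ} (hn : 1 ≤ n) {K : Matrix (Fin m) (Fin m) ℝ}
    (hK : K.PosDef) (a : Fin n → Fin m → ℝ) : 0 ≤ disagreement K a := by
  rw [disagreement_eq hn (by simpa using hK.isHermitian)]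
  refine mul_nonneg (by positivity) (Finset.sum_nonneg fun i _ => Finset.sum_nonneg fun j _ => ?_)
  simpa using hK.posSemidef.dotProduct_mulVec_nonneg (a i - a j)

/-- The consensus coupling dissipates exactly the disagreement energy. -/
lemma sum_coupling {n m : ℕ} (hn : 1 ≤ n) (K : Matrix (Fin m) (Fin m) ℝ)
    (a : Fin n → Fin m → ℝ) :
    ∑ i, a i ⬝ᵥ ((n : ℝ)⁻¹ • K *ᵥ ∑ j, (a j - a i)) = -disagreement K a := by
  have hn' : (n : ℝ) ≠ 0 := by positivity
  have h : ∀ i, a i ⬝ᵥ ((n : ℝ)⁻¹ • K *ᵥ ∑ j, (a j - a i))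
      = (n : ℝ)⁻¹ * ∑ j, a i ⬝ᵥ K *ᵥ a j - a i ⬝ᵥ K *ᵥ a i := by
    intro i
    rw [dotProduct_smul, smul_eq_mul, mulVec_sum, dotProduct_sum]
    simp only [mulVec_sub, dotProduct_sub, Finset.sum_sub_distrib, Finset.sum_const,
      Finset.card_univ, Fintype.card_fin, nsmul_eq_mul]
    field_simp
  rw [Finset.sum_congr rfl fun i _ => h i, Finset.sum_sub_distrib, ← Finset.mul_sum,
    disagreement, neg_sub]

end Aux

/-! ### Lyapunov analysis of the closed loop -/

/-- for `n` manipulators with error dynamics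
`H_i ṡ_i + (C_i + K_{D_i}) s_i = Y_i ã_i` and decentralized update
`ã̇_i = −P_i [Y_iᵀ s_i − (K/n) ∑ⱼ (ã_j − ã_i)]`, as `t → ∞` each `s_i → 0`,
the stacked error satisfies `ãᵀ L_K ã → 0`, and consequently `ã_i − ã_j → 0`
for every pair `i, j`. -/
theorem decentralized_tracking_and_synchronization (n nj m : ℕ) (hn : 1 ≤ n)
    (H C : Fin n → ℝ → Matrix (Fin nj) (Fin nj) ℝ)
    (KD : Fin n → Matrix (Fin nj) (Fin nj) ℝ)
    (Y dY : Fin n → ℝ → Matrix (Fin nj) (Fin m) ℝ)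
    (Pm : Fin n → Matrix (Fin m) (Fin m) ℝ)
    (K : Matrix (Fin m) (Fin m) ℝ)
    (μ M : ℝ) (hμ : 0 < μ) (hμM : μ ≤ M)
    (s ds : Fin n → ℝ → Fin nj → ℝ) (at' : Fin n → ℝ → Fin m → ℝ)
    -- each `H i t` symmetric with `μ I ⪯ H i t ⪯ M I`, continuously differentiable
    (hHsymm : ∀ i t, 0 ≤ t → (H i t).IsSymm)
    (hHlb : ∀ i t, 0 ≤ t → (H i t - μ • 1).PosSemidef)
    (hHub : ∀ i t, 0 ≤ t → ((M • 1 : Matrix (Fin nj) (Fin nj) ℝ) - H i t).PosSemidef)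
    (hHd : ∀ i, ∀ t, 0 ≤ t → ∀ a b,
      HasDerivWithinAt (fun τ => H i τ a b) ((C i t + (C i t)ᵀ) a b) (Set.Ici 0) t)
    -- each `C i` continuous and bounded
    (hCc : ∀ i a b, ContinuousOn (fun t => C i t a b) (Set.Ici 0))
    (hCbd : ∃ c, ∀ i, ∀ t, 0 ≤ t → ∀ a b, |C i t a b| ≤ c)
    -- the gains are symmetric positive definite
    (hKD : ∀ i, (KD i).PosDef) (hPm : ∀ i, (Pm i).PosDef) (hK : K.PosDef)
    -- each `Y i` continuously differentiable with `Y i` and `Y i '` bounded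
    (hYd : ∀ i, ∀ t, 0 ≤ t → ∀ a b,
      HasDerivWithinAt (fun τ => Y i τ a b) (dY i t a b) (Set.Ici 0) t)
    (hdYc : ∀ i a b, ContinuousOn (fun t => dY i t a b) (Set.Ici 0))
    (hYbd : ∃ c, ∀ i, ∀ t, 0 ≤ t → ∀ a b, |Y i t a b| ≤ c ∧ |dY i t a b| ≤ c)
    -- closed-loop dynamics and decentralized update law
    (hs : ∀ i, ∀ t, 0 ≤ t → HasDerivWithinAt (s i) (ds i t) (Set.Ici 0) t)
    (hdyn : ∀ i, ∀ t, 0 ≤ t →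
      H i t *ᵥ ds i t + (C i t + KD i) *ᵥ s i t = Y i t *ᵥ at' i t)
    (hat : ∀ i, ∀ t, 0 ≤ t →
      HasDerivWithinAt (at' i)
        (-(Pm i *ᵥ ((Y i t)ᵀ *ᵥ s i t -
          (n : ℝ)⁻¹ • (K *ᵥ ∑ j, (at' j t - at' i t))))) (Set.Ici 0) t) :
    (∀ i, Tendsto (s i) atTop (𝓝 0)) ∧
    Tendsto (fun t => (fun q : Fin n × Fin m => at' q.1 t q.2) ⬝ᵥ
      (blockLaplacian n m K *ᵥ fun q : Fin n × Fin m => at' q.1 t q.2)) atTop (𝓝 0) ∧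
    (∀ i j, Tendsto (fun t => at' i t - at' j t) atTop (𝓝 0)) := by
  have hHlb' : ∀ i t, 0 ≤ t → ∀ x : Fin nj → ℝ, μ * (x ⬝ᵥ x) ≤ x ⬝ᵥ H i t *ᵥ x := by
    intro i t ht x
    have h := (hHlb i t ht).dotProduct_mulVec_nonneg x
    simp only [star_trivial, sub_mulVec, smul_mulVec, one_mulVec, dotProduct_sub,
      dotProduct_smul, smul_eq_mul] at h
    linarith
  have hcoord : ∀ (x : Fin nj → ℝ) b, x b ^ 2 ≤ x ⬝ᵥ x := fun x b => by
    simpa [dotProduct, sq] using Finset.single_le_sum (f := fun b => x b * x b)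
      (fun b _ => mul_self_nonneg _) (Finset.mem_univ b)
  have hPi : ∀ i, (Pm i)⁻¹.PosDef := fun i => (hPm i).inv
  have hPsymm : ∀ i, (Pm i)⁻¹.IsSymm := fun i => by simpa using (hPi i).isHermitian
  have hKD0 : ∀ i (x : Fin nj → ℝ), 0 ≤ x ⬝ᵥ KD i *ᵥ x := fun i x => by
    simpa using (hKD i).posSemidef.dotProduct_mulVec_nonneg x
  have hP0 : ∀ i (x : Fin m → ℝ), 0 ≤ x ⬝ᵥ (Pm i)⁻¹ *ᵥ x := fun i x => by
    simpa using (hPi i).posSemidef.dotProduct_mulVec_nonneg x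
  have hH0 : ∀ i t, 0 ≤ t → ∀ x : Fin nj → ℝ, 0 ≤ x ⬝ᵥ H i t *ᵥ x := fun i t ht x =>
    (mul_nonneg hμ.le (Finset.sum_nonneg fun b _ => mul_self_nonneg (x b))).trans
      (hHlb' i t ht x)
  set V : ℝ → ℝ := fun t =>
    ∑ i, (1 / 2 * (s i t ⬝ᵥ H i t *ᵥ s i t) + 1 / 2 * (at' i t ⬝ᵥ (Pm i)⁻¹ *ᵥ at' i t)) with hVdef
  set W : ℝ → ℝ := fun t =>
    ∑ i, s i t ⬝ᵥ KD i *ᵥ s i t + disagreement K (fun i => at' i t) with hWdef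
  have hterm0 : ∀ i t, 0 ≤ t → 0 ≤
      1 / 2 * (s i t ⬝ᵥ H i t *ᵥ s i t) + 1 / 2 * (at' i t ⬝ᵥ (Pm i)⁻¹ *ᵥ at' i t) :=
    fun i t ht => add_nonneg (mul_nonneg (by norm_num) (hH0 i t ht _))
      (mul_nonneg (by norm_num) (hP0 i _))
  have hV0 : ∀ t, 0 ≤ t → 0 ≤ V t := fun t ht => Finset.sum_nonneg fun i _ => hterm0 i t ht
  have hW0 : ∀ t, 0 ≤ t → 0 ≤ W t := fun t ht =>
    add_nonneg (Finset.sum_nonneg fun i _ => hKD0 i _) (disagreement_nonneg hn hK _)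
  -- The Coriolis term cancels against half the derivative of the inertia, and the regressor
  -- terms cancel against the adaptation law, leaving only dissipation.
  have hV : ∀ t, 0 ≤ t → HasDerivWithinAt V (-W t) (Set.Ici 0) t := by
    intro t ht
    have hi : ∀ i, HasDerivWithinAt (fun t =>
        1 / 2 * (s i t ⬝ᵥ H i t *ᵥ s i t) + 1 / 2 * (at' i t ⬝ᵥ (Pm i)⁻¹ *ᵥ at' i t))
        (-(s i t ⬝ᵥ KD i *ᵥ s i t)
          + at' i t ⬝ᵥ ((n : ℝ)⁻¹ • K *ᵥ ∑ j, (at' j t - at' i t))) (Set.Ici 0) t := by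
      intro i
      have h1 := hasDerivWithinAt_dotProduct (hs i t ht)
        (hasDerivWithinAt_mulVec (hHd i t ht) (hs i t ht))
      have h2 := hasDerivWithinAt_dotProduct (hat i t ht)
        (hasDerivWithinAt_mulVec (A := fun _ => (Pm i)⁻¹) (A' := 0)
          (fun a b => hasDerivWithinAt_const ..) (hat i t ht))
      refine ((h1.const_mul (1 / 2)).fun_add (h2.const_mul (1 / 2))).congr_deriv ?_
      have hdyn' : s i t ⬝ᵥ H i t *ᵥ ds i t = s i t ⬝ᵥ Y i t *ᵥ at' i t
          - s i t ⬝ᵥ C i t *ᵥ s i t - s i t ⬝ᵥ KD i *ᵥ s i t := by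
        rw [← hdyn i t ht, add_mulVec, dotProduct_add, dotProduct_add]
        ring
      have hCt : s i t ⬝ᵥ (C i t)ᵀ *ᵥ s i t = s i t ⬝ᵥ C i t *ᵥ s i t := by
        rw [mulVec_transpose, dotProduct_comm, ← dotProduct_mulVec]
      have hYt : at' i t ⬝ᵥ (Y i t)ᵀ *ᵥ s i t = s i t ⬝ᵥ Y i t *ᵥ at' i t := by
        rw [mulVec_transpose, dotProduct_comm, ← dotProduct_mulVec]
      have hPP : ∀ v : Fin m → ℝ, (Pm i)⁻¹ *ᵥ (-(Pm i *ᵥ v)) = -v := fun v => by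
        rw [mulVec_neg, mulVec_mulVec,
          nonsing_inv_mul _ ((isUnit_iff_isUnit_det _).1 (hPm i).isUnit), one_mulVec]
      rw [symm_dot (hHsymm i t ht) (ds i t), symm_dot (hPsymm i) (-(Pm i *ᵥ _)), zero_mulVec,
        zero_add, hPP, dotProduct_neg, dotProduct_sub, hYt, dotProduct_add, add_mulVec,
        dotProduct_add, hCt, hdyn']
      ring
    refine (HasDerivWithinAt.fun_sum fun i _ => hi i).congr_deriv ?_
    rw [Finset.sum_add_distrib, sum_coupling hn K fun i => at' i t, Finset.sum_neg_distrib, hWdef]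
    ring
  have hVle : ∀ t, 0 ≤ t → V t ≤ V 0 := fun t ht =>
    antitoneOn_of_hasDerivWithinAt_nonpos (convex_Ici 0)
      (fun t ht => (hV t ht).continuousWithinAt)
      (fun t ht => (hV t (interior_subset ht)).mono interior_subset)
      (fun t ht => by simpa using hW0 t (interior_subset ht))
      (Set.mem_Ici.2 le_rfl) (Set.mem_Ici.2 ht) ht
  have hterm : ∀ i t, 0 ≤ t →
      1 / 2 * (s i t ⬝ᵥ H i t *ᵥ s i t) + 1 / 2 * (at' i t ⬝ᵥ (Pm i)⁻¹ *ᵥ at' i t) ≤ V 0 :=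
    fun i t ht => (Finset.single_le_sum (fun i _ => hterm0 i t ht) (Finset.mem_univ i)).trans
      (hVle t ht)
  have hsB : ∀ i b, Bdd fun t => s i t b := fun i b =>
    Bdd.of_sq_le hμ (.const (2 * V 0)) fun t ht => by
      have h1 := hterm i t ht
      have h2 := hP0 i (at' i t)
      have h3 := hHlb' i t ht (s i t)
      have h4 := mul_le_mul_of_nonneg_left (hcoord (s i t) b) hμ.le
      linarith
  have haB : ∀ i b, Bdd fun t => at' i t b := fun i b => by
    obtain ⟨c, hc, h⟩ := posDef_coord_sq_le (hPi i)
    refine Bdd.of_sq_le hc (.const (2 * V 0)) fun t ht => ?_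
    have h1 := hterm i t ht
    have h2 := h (at' i t) b
    have h3 := hH0 i t ht (s i t)
    linarith
  have hYB : ∀ i a b, Bdd fun t => Y i t a b := fun i a b => by
    obtain ⟨c, hc⟩ := hYbd
    exact ⟨c, fun t ht => (hc i t ht a b).1⟩
  have hCB : ∀ i a b, Bdd fun t => C i t a b := fun i a b => by
    obtain ⟨c, hc⟩ := hCbd
    exact ⟨c, fun t ht => hc i t ht a b⟩
  have hdsB : ∀ i b, Bdd fun t => ds i t b := by
    intro i b
    set r : ℝ → Fin nj → ℝ := fun t => Y i t *ᵥ at' i t - (C i t + KD i) *ᵥ s i t with hr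
    have hrB : ∀ a, Bdd fun t => r t a := fun a =>
      (Bdd.mulVec (hYB i) (haB i) a).sub
        (Bdd.mulVec (fun a b => (hCB i a b).add (.const (KD i a b))) (hsB i) a)
    refine Bdd.of_sq_le (pow_pos hμ 2) (Bdd.sum Finset.univ fun a => (hrB a).mul (hrB a))
      fun t ht => ?_
    have h1 : H i t *ᵥ ds i t = r t := by simp [hr, ← hdyn i t ht]
    have h2 := hHlb' i t ht (ds i t)
    rw [h1] at h2
    -- With `2μ² |ds|² ≤ 2μ ds·r`, Young's inequality gives `μ² |ds|² ≤ |r|²`.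
    have h3 : 2 * μ * (ds i t ⬝ᵥ r t) ≤ μ ^ 2 * (ds i t ⬝ᵥ ds i t) + r t ⬝ᵥ r t := by
      simp only [dotProduct, Finset.mul_sum, ← Finset.sum_add_distrib]
      exact Finset.sum_le_sum fun a _ => by nlinarith [sq_nonneg (μ * ds i t a - r t a)]
    have h4 := mul_le_mul_of_nonneg_left h2 hμ.le
    have h5 := mul_le_mul_of_nonneg_left (hcoord (ds i t) b) (sq_nonneg μ)
    change _ ≤ r t ⬝ᵥ r t
    nlinarith
  have hsC : ∀ i b, BddC1 fun t => s i t b := fun i b =>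
    ⟨hsB i b, fun t => ds i t b, fun t ht => hasDerivWithinAt_pi.1 (hs i t ht) b, hdsB i b⟩
  have haC : ∀ i b, BddC1 fun t => at' i t b := fun i b => by
    refine ⟨haB i b, _, fun t ht => hasDerivWithinAt_pi.1 (hat i t ht) b, ?_⟩
    refine (Bdd.mulVec (fun a b => .const (Pm i a b)) (fun a => ?_) b).neg
    refine (Bdd.mulVec (fun a b => hYB i b a) (hsB i) a).sub ((Bdd.const _).mul
      (Bdd.mulVec (fun a b => .const (K a b)) (fun k => ?_) a))
    simp only [Finset.sum_apply, Pi.sub_apply]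
    exact Bdd.sum _ fun j => (haB j k).sub (haB i k)
  have hWC : BddC1 W :=
    (BddC1.sum _ fun i => BddC1.bilin (KD i) (hsC i) (hsC i)).add
      ((BddC1.sum _ fun i => BddC1.bilin K (haC i) (haC i)).sub
        ((BddC1.const _).mul (BddC1.sum _ fun i => BddC1.sum _ fun j =>
          BddC1.bilin K (haC i) (haC j))))
  have hWlim : Tendsto W atTop (𝓝 0) := barbalat hV hV0 hW0 hWC
  have hD : Tendsto (fun t => disagreement K fun i => at' i t) atTop (𝓝 0) :=
    tendsto_of_tendsto_of_tendsto_of_le_of_le tendsto_const_nhds hWlim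
      (fun t => disagreement_nonneg hn hK _)
      (fun t => le_add_of_nonneg_left (Finset.sum_nonneg fun i _ => hKD0 i _))
  refine ⟨fun i => tendsto_pi_nhds.2 fun b => ?_, ?_, fun i j => tendsto_pi_nhds.2 fun k => ?_⟩
  · obtain ⟨c, hc, h⟩ := posDef_coord_sq_le (hKD i)
    refine tendsto_zero_of_sq_le hc hWlim fun t ht => (h (s i t) b).trans ?_
    exact (Finset.single_le_sum (f := fun i => s i t ⬝ᵥ KD i *ᵥ s i t) (fun i _ => hKD0 i _)
      (Finset.mem_univ i)).trans (le_add_of_nonneg_right (disagreement_nonneg hn hK _))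
  · exact hD.congr fun t => (blockLaplacian_form K fun i => at' i t).symm
  · obtain ⟨c, hc, h⟩ := sq_le_disagreement (n := n) hn hK
    exact tendsto_zero_of_sq_le hc hD fun t _ => h (fun i => at' i t) i j k
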